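/- There exists a function f : [0,1] → ℝ, Hölder continuous of every exponent α ∈ (0,1), and a constant r > 0 such that f_#(𝟙_S L¹) = r · 𝟙_{[0,1]} L¹, where S is the critical set of f; in particular f_#(𝟙_S L¹) is absolutely continuous with respect to Lebesgue measure and nonzero. -/

import Mathlib

open MeasureTheory Set

noncomputable section

/-- The critical set of `f : [0,1] → ℝ`: points of `[0,1]` where `f` is either not
differentiable or has zero derivative. -/
def critSet1 (f : ℝ → ℝ) : Set ℝ :=
  {x | x ∈ Set.Icc (0:ℝ) 1 ∧
    (¬ DifferentiableWithinAt ℝ f (Set.Icc (0:ℝ) 1) x ∨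
      derivWithin f (Set.Icc (0:ℝ) 1) x = 0)}

/-- `f` is Hölder continuous of exponent `α` on `[0,1]`. -/
def HolderOnUnit (f : ℝ → ℝ) (α : ℝ) : Prop :=
  ∃ C : ℝ, ∀ x ∈ Set.Icc (0:ℝ) 1, ∀ y ∈ Set.Icc (0:ℝ) 1, |f x - f y| ≤ C * |x - y| ^ α

/-!
Folding the line at scale `1 / c` by a zigzag with slopes `3, -3, 3` moves each point by at most
`1 / c` and preserves Lebesgue measure on `[0,1]`. Composing such folds at scales `1 / c 0`,
`1 / c 1`, … that shrink superexponentially gives a uniform limit `f`, which still preserves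
Lebesgue measure on `[0,1]`. The folds after the `n`-th fix the grid of mesh `1 / c n`, whereas the
first `n` folds stretch every cell of this grid by the factor `3 ^ n`; hence `f` is nowhere
differentiable and its critical set is all of `[0,1]`, up to endpoints. On the other hand
`3 ^ n = O(c n ^ β)` for every `β > 0`, so `f` only just fails to be Lipschitz.
-/

open Filter Topology
open scoped BoundedContinuousFunction

/-! ### Measure preservation and non-differentiability criteria -/

section MeasurePreserving

variable {α β : Type*} [MeasurableSpace α] [TopologicalSpace β] [MeasurableSpace β] [BorelSpace β]
  {μ : Measure α} {ν : Measure β} [IsFiniteMeasure μ]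

theorem measurePreserving_of_forall_integral_comp_eq [HasOuterApproxClosed β] [IsFiniteMeasure ν]
    {f : α → β} (hf : Measurable f) (h : ∀ g : β →ᵇ ℝ, ∫ x, g (f x) ∂μ = ∫ y, g y ∂ν) :
    MeasurePreserving f μ ν := by
  refine ⟨hf, ext_of_forall_integral_eq_of_IsFiniteMeasure fun g ↦ ?_⟩
  rw [integral_map hf.aemeasurable g.continuous.aestronglyMeasurable, h]

theorem measurePreserving_of_tendsto [TopologicalSpace.PseudoMetrizableSpace β] {ι : Type*}
    {l : Filter ι} [l.NeBot] [l.IsCountablyGenerated] {f : ι → α → β} {g : α → β}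
    (hf : ∀ i, MeasurePreserving (f i) μ ν) (hlim : ∀ x, Tendsto (f · x) l (𝓝 (g x))) :
    MeasurePreserving g μ ν := by
  have hg : Measurable g :=
    measurable_of_tendsto_metrizable' l (fun i ↦ (hf i).measurable) (tendsto_pi_nhds.2 hlim)
  obtain ⟨i⟩ : Nonempty ι := l.nonempty_of_neBot
  have : IsFiniteMeasure ν := (hf i).map_eq ▸ inferInstance
  refine measurePreserving_of_forall_integral_comp_eq hg fun φ ↦ ?_
  have hconst (i : ι) : ∫ x, φ (f i x) ∂μ = ∫ y, φ y ∂ν := by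
    rw [← (hf i).map_eq, integral_map (hf i).measurable.aemeasurable
      φ.continuous.aestronglyMeasurable]
  have hconv : Tendsto (fun i ↦ ∫ x, φ (f i x) ∂μ) l (𝓝 (∫ x, φ (g x) ∂μ)) :=
    tendsto_integral_filter_of_dominated_convergence (fun _ ↦ ‖φ‖)
      (.of_forall fun i ↦ (φ.continuous.measurable.comp (hf i).measurable).aestronglyMeasurable)
      (.of_forall fun i ↦ .of_forall fun x ↦ φ.norm_coe_le_norm _) (integrable_const _)
      (.of_forall fun x ↦ (φ.continuous.tendsto _).comp (hlim x))
  simp_rw [hconst] at hconv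
  exact tendsto_nhds_unique hconv tendsto_const_nhds

end MeasurePreserving

theorem not_differentiableAt_of_frequently_lt_dist {E ι : Type*} [NormedAddCommGroup E]
    [NormedSpace ℝ E] {f : ℝ → E} {x : ℝ} {l : Filter ι} {a b : ι → ℝ}
    (ha : Tendsto a l (𝓝 x)) (hb : Tendsto b l (𝓝 x)) (hax : ∀ i, a i ≤ x) (hxb : ∀ i, x ≤ b i)
    (hsteep : ∀ C : ℝ, ∃ᶠ i in l, C * (b i - a i) < dist (f (b i)) (f (a i))) :
    ¬ DifferentiableAt ℝ f x := by
  intro hf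
  obtain ⟨C, hC⟩ := hf.isBigO_sub.bound
  refine hsteep C ?_
  filter_upwards [ha.eventually hC, hb.eventually hC] with i hai hbi
  rw [not_lt]
  calc dist (f (b i)) (f (a i)) ≤ ‖f (b i) - f x‖ + ‖f (a i) - f x‖ := by
        simpa only [dist_eq_norm] using dist_triangle_right (f (b i)) (f (a i)) (f x)
    _ ≤ C * ‖b i - x‖ + C * ‖a i - x‖ := add_le_add hbi hai
    _ = C * (b i - a i) := by
        rw [Real.norm_of_nonneg (sub_nonneg.2 (hxb i)), Real.norm_of_nonpos (sub_nonpos.2 (hax i))]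
        ring

theorem critSet1_ae_eq_Icc {f : ℝ → ℝ} (hf : ∀ x, ¬ DifferentiableAt ℝ f x) :
    critSet1 f =ᵐ[volume] Icc (0 : ℝ) 1 := by
  have hIoo : Ioo (0 : ℝ) 1 ⊆ critSet1 f := fun x hx ↦
    ⟨Ioo_subset_Icc_self hx,
      .inl fun h ↦ hf x (h.differentiableAt (Icc_mem_nhds hx.1 hx.2))⟩
  have hIcc : critSet1 f ⊆ Icc 0 1 := fun _ hx ↦ hx.1
  exact hIcc.eventuallyLE.antisymm (Ioo_ae_eq_Icc.symm.le.trans hIoo.eventuallyLE)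

/-! ### The zigzag -/

/-- The tent of slopes `±3` with apex `n + 1` at `n + 1 / 3`, one tooth of the zigzag. -/
def tent (n : ℤ) (x : ℝ) : ℝ := n + 1 - |3 * x - 3 * n - 1|

/-- The piecewise affine map `ℝ → ℝ` that folds each interval `[n, n + 1]`, `n : ℤ`, onto itself
with slopes `3, -3, 3`. It is encoded as the upper envelope of the tents: `tent n` is the largest
one on `[n - 1 / 3, n + 2 / 3]`. -/
def zigzag (x : ℝ) : ℝ := tent ⌊x + 1 / 3⌋ x

theorem tent_le_tent {n : ℤ} {x : ℝ} (hx : x ∈ Icc (n - 1 / 3 : ℝ) (n + 2 / 3)) (m : ℤ) :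
    tent m x ≤ tent n x := by
  obtain ⟨h₁, h₂⟩ := hx
  rcases lt_trichotomy m n with h | rfl | h
  · have h' : (m : ℝ) + 1 ≤ n := by exact_mod_cast h
    unfold tent
    cases abs_cases (3 * x - 3 * m - 1) <;> cases abs_cases (3 * x - 3 * n - 1) <;> linarith
  · rfl
  · have h' : (n : ℝ) + 1 ≤ m := by exact_mod_cast h
    unfold tent
    cases abs_cases (3 * x - 3 * m - 1) <;> cases abs_cases (3 * x - 3 * n - 1) <;> linarith

theorem mem_Icc_floor_add_third (x : ℝ) :
    x ∈ Icc (⌊x + 1 / 3⌋ - 1 / 3 : ℝ) (⌊x + 1 / 3⌋ + 2 / 3) := by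
  have h₁ := Int.floor_le (x + 1 / 3)
  have h₂ := Int.lt_floor_add_one (x + 1 / 3)
  constructor <;> linarith

theorem tent_le_zigzag (n : ℤ) (x : ℝ) : tent n x ≤ zigzag x :=
  tent_le_tent (mem_Icc_floor_add_third x) n

theorem zigzag_eq_tent {n : ℤ} {x : ℝ} (hx : x ∈ Icc (n - 1 / 3 : ℝ) (n + 2 / 3)) :
    zigzag x = tent n x :=
  (tent_le_tent hx _).antisymm (tent_le_zigzag n x)

theorem zigzag_of_mem_rising {n : ℤ} {x : ℝ} (hx : x ∈ Icc (n - 1 / 3 : ℝ) (n + 1 / 3)) :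
    zigzag x = 3 * x - 2 * n := by
  rw [zigzag_eq_tent ⟨hx.1, by linarith [hx.2]⟩, tent, abs_of_nonpos (by linarith [hx.2])]
  ring

theorem zigzag_of_mem_falling {n : ℤ} {x : ℝ} (hx : x ∈ Icc (n + 1 / 3 : ℝ) (n + 2 / 3)) :
    zigzag x = 4 * n + 2 - 3 * x := by
  rw [zigzag_eq_tent ⟨by linarith [hx.1], hx.2⟩, tent, abs_of_nonneg (by linarith [hx.1])]
  ring

theorem zigzag_intCast (n : ℤ) : zigzag n = n := by
  rw [zigzag_of_mem_rising (n := n) (by constructor <;> linarith)]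
  ring

theorem lipschitzWith_zigzag : LipschitzWith 3 zigzag := by
  refine .of_le_add_mul 3 fun x y ↦ ?_
  set n := ⌊x + 1 / 3⌋
  have htent : tent n x ≤ tent n y + 3 * |x - y| := by
    have h := abs_sub_abs_le_abs_sub (3 * y - 3 * n - 1) (3 * x - 3 * n - 1)
    rw [show 3 * y - 3 * n - 1 - (3 * x - 3 * n - 1) = 3 * (y - x) by ring, abs_mul,
      abs_of_pos (three_pos (α := ℝ)), abs_sub_comm y x] at h
    unfold tent
    linarith
  exact htent.trans (add_le_add_left (tent_le_zigzag n y) _)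

theorem dist_zigzag_self_le (x : ℝ) : dist (zigzag x) x ≤ 1 := by
  obtain ⟨h₁, h₂⟩ := mem_Icc_floor_add_third x
  rw [Real.dist_eq, abs_le, zigzag, tent]
  cases abs_cases (3 * x - 3 * ⌊x + 1 / 3⌋ - 1) <;> constructor <;> linarith

theorem zigzag_affine_on_third (k : ℤ) : ∃ n : ℤ,
    (∀ x : ℝ, 3 * x ∈ Icc (k : ℝ) (k + 1) → zigzag x = n + (3 * x - k)) ∨
      ∀ x : ℝ, 3 * x ∈ Icc (k : ℝ) (k + 1) → zigzag x = n + 1 - (3 * x - k) := by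
  obtain ⟨n, rfl | rfl | rfl⟩ : ∃ n, k = 3 * n ∨ k = 3 * n + 1 ∨ k = 3 * n + 2 :=
    ⟨k / 3, by omega⟩ <;> refine ⟨n, ?_⟩ <;> push_cast
  · refine .inl fun x hx ↦ ?_
    rw [zigzag_of_mem_rising (n := n) (by constructor <;> linarith [hx.1, hx.2])]
    ring
  · refine .inr fun x hx ↦ ?_
    rw [zigzag_of_mem_falling (n := n) (by constructor <;> linarith [hx.1, hx.2])]
    ring
  · refine .inl fun x hx ↦ ?_
    rw [zigzag_of_mem_rising (n := n + 1)
      (by push_cast; constructor <;> linarith [hx.1, hx.2])]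
    push_cast
    ring

section Integral

variable {E : Type*} [NormedAddCommGroup E] [NormedSpace ℝ E] {g : ℝ → E}

theorem integral_comp_zigzag_rising (g : ℝ → E) {n : ℤ} {a b : ℝ} (hab : a ≤ b)
    (ha : n - 1 / 3 ≤ a) (hb : b ≤ n + 1 / 3) :
    ∫ x in a..b, g (zigzag x) = (3 : ℝ)⁻¹ • ∫ x in 3 * a - 2 * n..3 * b - 2 * n, g x := by
  rw [← intervalIntegral.integral_comp_mul_sub g three_ne_zero]
  refine intervalIntegral.integral_congr fun x hx ↦ congrArg g (zigzag_of_mem_rising ?_)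
  rw [uIcc_of_le hab] at hx
  exact ⟨ha.trans hx.1, hx.2.trans hb⟩

theorem integral_comp_zigzag_falling (g : ℝ → E) {n : ℤ} {a b : ℝ} (hab : a ≤ b)
    (ha : n + 1 / 3 ≤ a) (hb : b ≤ n + 2 / 3) :
    ∫ x in a..b, g (zigzag x) =
      (3 : ℝ)⁻¹ • ∫ x in 4 * n + 2 - 3 * b..4 * n + 2 - 3 * a, g x := by
  rw [← intervalIntegral.integral_comp_sub_mul g three_ne_zero]
  refine intervalIntegral.integral_congr fun x hx ↦ congrArg g (zigzag_of_mem_falling ?_)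
  rw [uIcc_of_le hab] at hx
  exact ⟨ha.trans hx.1, hx.2.trans hb⟩

theorem integral_comp_zigzag_cell (hg : Continuous g) (n : ℤ) :
    ∫ x in (n : ℝ)..n + 1, g (zigzag x) = ∫ x in (n : ℝ)..n + 1, g x := by
  have hint (a b : ℝ) : IntervalIntegrable (fun x ↦ g (zigzag x)) volume a b :=
    (hg.comp lipschitzWith_zigzag.continuous).intervalIntegrable a b
  have first : ∫ x in (n : ℝ)..n + 1 / 3, g (zigzag x) =
      (3 : ℝ)⁻¹ • ∫ x in (n : ℝ)..n + 1, g x := by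
    rw [integral_comp_zigzag_rising g (n := n) (by linarith) (by linarith) le_rfl]
    congr 2 <;> ring
  have middle : ∫ x in (n + 1 / 3 : ℝ)..n + 2 / 3, g (zigzag x) =
      (3 : ℝ)⁻¹ • ∫ x in (n : ℝ)..n + 1, g x := by
    rw [integral_comp_zigzag_falling g (by linarith) le_rfl le_rfl]
    congr 2 <;> ring
  have last : ∫ x in (n + 2 / 3 : ℝ)..n + 1, g (zigzag x) =
      (3 : ℝ)⁻¹ • ∫ x in (n : ℝ)..n + 1, g x := by
    rw [integral_comp_zigzag_rising g (n := n + 1) (by linarith) (by push_cast; linarith)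
      (by push_cast; linarith)]
    push_cast
    congr 2 <;> ring
  rw [← intervalIntegral.integral_add_adjacent_intervals (hint n (n + 1 / 3)) (hint _ _),
    ← intervalIntegral.integral_add_adjacent_intervals (hint (n + 1 / 3) (n + 2 / 3)) (hint _ _),
    first, middle, last]
  module

theorem integral_comp_zigzag (hg : Continuous g) (N : ℕ) :
    ∫ x in (0 : ℝ)..N, g (zigzag x) = ∫ x in (0 : ℝ)..N, g x := by
  have hsum {φ : ℝ → E} (hφ : Continuous φ) :
      ∑ k ∈ Finset.range N, ∫ x in (k : ℝ)..(k + 1 : ℕ), φ x = ∫ x in (0 : ℝ)..N, φ x := by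
    rw [intervalIntegral.sum_integral_adjacent_intervals
      fun k _ ↦ hφ.intervalIntegrable k (k + 1 : ℕ), Nat.cast_zero]
  rw [← hsum hg, ← hsum (φ := fun x ↦ g (zigzag x)) (hg.comp lipschitzWith_zigzag.continuous)]
  refine Finset.sum_congr rfl fun k _ ↦ ?_
  simpa using integral_comp_zigzag_cell hg k

end Integral

/-! ### The zigzag at scale `1 / N` -/

/-- The zigzag rescaled so as to fold every interval `[k / N, (k + 1) / N]` onto itself. -/
def zigzagAt (N : ℕ) (x : ℝ) : ℝ := zigzag (N * x) / N

/-- The points `x` and `y` lie in a common cell `[k / N, (k + 1) / N]`, `k : ℤ`. -/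
def SameCell (N : ℕ) (x y : ℝ) : Prop :=
  ∃ k : ℤ, N * x ∈ Icc (k : ℝ) (k + 1) ∧ N * y ∈ Icc (k : ℝ) (k + 1)

theorem SameCell.of_dvd {M N : ℕ} {x y : ℝ} (hM : 0 < M) (hNM : N ∣ M) (h : SameCell M x y) :
    SameCell N x y := by
  obtain ⟨d, rfl⟩ := hNM
  have hd : 0 < (d : ℤ) := by exact_mod_cast Nat.pos_of_mul_pos_left hM
  obtain ⟨k, hx, hy⟩ := h
  have hlower : ((k / d : ℤ) : ℝ) * d ≤ k := by exact_mod_cast Int.ediv_mul_le k hd.ne'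
  have hupper : (k : ℝ) + 1 ≤ ((k / d : ℤ) + 1) * d := by
    exact_mod_cast Int.lt_ediv_add_one_mul_self k hd
  have coarsen {z : ℝ} (hz : (N * d : ℕ) * z ∈ Icc (k : ℝ) (k + 1)) :
      N * z ∈ Icc ((k / d : ℤ) : ℝ) ((k / d : ℤ) + 1) := by
    have hd' : (0 : ℝ) < d := by exact_mod_cast hd
    have hNdz : ((N * d : ℕ) : ℝ) * z = N * z * d := by push_cast; ring
    rw [hNdz] at hz
    exact ⟨le_of_mul_le_mul_right (hlower.trans hz.1) hd',
      le_of_mul_le_mul_right (hz.2.trans hupper) hd'⟩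
  exact ⟨k / d, coarsen hx, coarsen hy⟩

theorem dist_zigzag_of_sameCell {x y : ℝ} (h : SameCell 3 x y) :
    dist (zigzag x) (zigzag y) = 3 * dist x y := by
  obtain ⟨k, hx, hy⟩ := h
  have hthree : |3 * (x - y)| = 3 * |x - y| := by rw [abs_mul, abs_of_pos three_pos]
  obtain ⟨n, h | h⟩ := zigzag_affine_on_third k
  · rw [h x hx, h y hy, Real.dist_eq, Real.dist_eq, ← hthree]
    ring_nf
  · rw [h x hx, h y hy, Real.dist_eq, Real.dist_eq, ← hthree, ← abs_neg]
    ring_nf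

theorem SameCell.zigzag {x y : ℝ} (h : SameCell 3 x y) :
    SameCell 1 (zigzag x) (zigzag y) := by
  obtain ⟨k, hx, hy⟩ := h
  obtain ⟨n, h | h⟩ := zigzag_affine_on_third k <;> refine ⟨n, ?_⟩ <;>
    rw [h x hx, h y hy, Nat.cast_one, one_mul, one_mul] <;>
    push_cast at hx hy <;>
    refine ⟨⟨?_, ?_⟩, ?_, ?_⟩ <;> linarith [hx.1, hx.2, hy.1, hy.2]

section Rescaled

variable {N : ℕ}

theorem continuous_zigzagAt : Continuous (zigzagAt N) :=
  (lipschitzWith_zigzag.continuous.comp (continuous_const_mul _)).div_const _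

theorem dist_zigzagAt (x y : ℝ) :
    dist (zigzagAt N x) (zigzagAt N y) = dist (zigzag (N * x)) (zigzag (N * y)) / N := by
  rw [zigzagAt, zigzagAt, Real.dist_eq, ← sub_div, abs_div, Nat.abs_cast, Real.dist_eq]

theorem dist_natCast_mul (x y : ℝ) : dist (N * x) (N * y) = N * dist x y := by
  rw [Real.dist_eq, ← mul_sub, abs_mul, Nat.abs_cast, Real.dist_eq]

variable (hN : 0 < N)
include hN

theorem mul_zigzagAt (x : ℝ) : N * zigzagAt N x = zigzag (N * x) :=
  mul_div_cancel₀ _ (by positivity)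

theorem lipschitzWith_zigzagAt : LipschitzWith 3 (zigzagAt N) := by
  refine .of_dist_le_mul fun x y ↦ ?_
  rw [dist_zigzagAt, div_le_iff₀ (by positivity)]
  exact (lipschitzWith_zigzag.dist_le_mul _ _).trans_eq (by rw [dist_natCast_mul]; ring)

theorem dist_zigzagAt_self_le (x : ℝ) : dist (zigzagAt N x) x ≤ 1 / N := by
  rw [le_div_iff₀ (by positivity), mul_comm, ← dist_natCast_mul, mul_zigzagAt hN]
  exact dist_zigzag_self_le _

theorem zigzagAt_eq_self {x : ℝ} {k : ℤ} (hk : N * x = k) : zigzagAt N x = x := by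
  rw [zigzagAt, hk, zigzag_intCast, ← hk, mul_div_cancel_left₀ _ (by positivity)]

theorem dist_zigzagAt_of_sameCell {x y : ℝ} (h : SameCell (3 * N) x y) :
    dist (zigzagAt N x) (zigzagAt N y) = 3 * dist x y := by
  rw [dist_zigzagAt, dist_zigzag_of_sameCell (by simpa [SameCell, mul_assoc] using h),
    dist_natCast_mul]
  field_simp

theorem SameCell.zigzagAt {x y : ℝ} (h : SameCell (3 * N) x y) :
    SameCell N (zigzagAt N x) (zigzagAt N y) := by
  have h' : SameCell 3 (N * x) (N * y) := by simpa [SameCell, mul_assoc] using h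
  simpa [SameCell, mul_zigzagAt hN] using h'.zigzag

theorem integral_comp_zigzagAt {E : Type*} [NormedAddCommGroup E] [NormedSpace ℝ E] {g : ℝ → E}
    (hg : Continuous g) : ∫ x in (0 : ℝ)..1, g (zigzagAt N x) = ∫ x in (0 : ℝ)..1, g x := by
  have hN' : (N : ℝ) ≠ 0 := by positivity
  calc ∫ x in (0 : ℝ)..1, g (zigzagAt N x)
      = (N : ℝ)⁻¹ • ∫ u in (0 : ℝ)..N, g (zigzag u / N) := by
        simpa [zigzagAt] using intervalIntegral.integral_comp_mul_left (a := 0) (b := 1)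
          (fun u ↦ g (zigzag u / N)) hN'
    _ = (N : ℝ)⁻¹ • ∫ u in (0 : ℝ)..N, g (u / N) := by
        rw [integral_comp_zigzag (g := fun u ↦ g (u / N)) (by fun_prop)]
    _ = ∫ x in (0 : ℝ)..1, g x := by
        rw [intervalIntegral.integral_comp_div _ hN', smul_smul, inv_mul_cancel₀ hN', one_smul,
          zero_div, div_self hN']

theorem measurePreserving_zigzagAt :
    MeasurePreserving (zigzagAt N) (volume.restrict (Icc 0 1)) (volume.restrict (Icc 0 1)) := by
  refine measurePreserving_of_forall_integral_comp_eq continuous_zigzagAt.measurable fun g ↦ ?_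
  simpa only [integral_Icc_eq_integral_Ioc, intervalIntegral.integral_of_le zero_le_one]
    using integral_comp_zigzagAt hN g.continuous

end Rescaled

/-! ### Composing zigzags at shrinking scales -/

/-- A sequence of inverse scales for the successive zigzags. Divisibility makes the grids of mesh
`1 / c n` nested; the factor `9` beats the Lipschitz constant `3` of a zigzag, which makes the
compositions converge geometrically, and leaves room for subdividing each cell into thirds. -/
structure IsScaleSequence (c : ℕ → ℕ) : Prop where
  zero : c 0 = 1
  pos : ∀ n, 0 < c n
  nine_mul_dvd_succ : ∀ n, 9 * c n ∣ c (n + 1)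

/-- The composition `zigzagAt (c 0) ∘ zigzagAt (c 1) ∘ ⋯ ∘ zigzagAt (c (n - 1))`. -/
def zigzagComp (c : ℕ → ℕ) : ℕ → ℝ → ℝ
  | 0 => id
  | n + 1 => zigzagComp c n ∘ zigzagAt (c n)

/-- The pointwise limit of the compositions `zigzagComp c n`; it exists whenever `c` is a scale
sequence, by `tendsto_zigzagComp`. -/
def zigzagLimit (c : ℕ → ℕ) (x : ℝ) : ℝ := limUnder atTop fun n ↦ zigzagComp c n x

variable {c : ℕ → ℕ}

namespace IsScaleSequence

variable (hc : IsScaleSequence c)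
include hc

theorem dvd_of_le {m n : ℕ} (hmn : m ≤ n) : c m ∣ c n := by
  induction n, hmn using Nat.le_induction with
  | base => exact dvd_rfl
  | succ n _ ih => exact ih.trans ((Dvd.intro_left 9 rfl).trans (hc.nine_mul_dvd_succ n))

theorem nine_pow_mul_le (n k : ℕ) : 9 ^ k * c n ≤ c (n + k) := by
  induction k with
  | zero => simp
  | succ k ih =>
    calc 9 ^ (k + 1) * c n = 9 * (9 ^ k * c n) := by ring
      _ ≤ 9 * c (n + k) := Nat.mul_le_mul_left 9 ih
      _ ≤ c (n + (k + 1)) := Nat.le_of_dvd (hc.pos _) (hc.nine_mul_dvd_succ _)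

theorem tendsto_inv_atTop_zero : Tendsto (fun n ↦ 1 / (c n : ℝ)) atTop (𝓝 0) := by
  refine squeeze_zero (fun n ↦ by positivity) (fun n ↦ ?_)
    (tendsto_pow_atTop_nhds_zero_of_lt_one (r := 1 / 9) (by norm_num) (by norm_num))
  rw [one_div_pow]
  refine one_div_le_one_div_of_le (by positivity) ?_
  simpa [hc.zero] using Nat.cast_le (α := ℝ).2 (hc.nine_pow_mul_le 0 n)

theorem exists_between_consecutive {t : ℝ} (h₀ : 0 < t) (h₁ : t ≤ 1) :
    ∃ n, 1 / (c (n + 1) : ℝ) < t ∧ t ≤ 1 / c n := by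
  classical
  have hex : ∃ n, 1 / (c n : ℝ) < t := (hc.tendsto_inv_atTop_zero.eventually_lt_const h₀).exists
  obtain ⟨n, hn⟩ : ∃ n, Nat.find hex = n + 1 :=
    Nat.exists_eq_succ_of_ne_zero fun h ↦ by
      simpa [hc.zero, h₁.not_gt] using (Nat.find_eq_zero hex).1 h
  exact ⟨n, hn ▸ Nat.find_spec hex, not_lt.1 (Nat.find_min hex (by omega))⟩

end IsScaleSequence

section Limit

variable (hc : IsScaleSequence c)
include hc

theorem lipschitzWith_zigzagComp (n : ℕ) : LipschitzWith (3 ^ n) (zigzagComp c n) := by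
  induction n with
  | zero => exact LipschitzWith.id
  | succ n ih => exact pow_succ (3 : NNReal) n ▸ ih.comp (lipschitzWith_zigzagAt (hc.pos n))

theorem measurePreserving_zigzagComp (n : ℕ) :
    MeasurePreserving (zigzagComp c n) (volume.restrict (Icc 0 1))
      (volume.restrict (Icc 0 1)) := by
  induction n with
  | zero => exact MeasurePreserving.id _
  | succ n ih => exact ih.comp (measurePreserving_zigzagAt (hc.pos n))

theorem dist_zigzagComp_of_sameCell (n : ℕ) {x y : ℝ} (h : SameCell (c n) x y) :
    dist (zigzagComp c n x) (zigzagComp c n y) = 3 ^ n * dist x y := by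
  induction n generalizing x y with
  | zero => simp [zigzagComp]
  | succ n ih =>
    have hthird : SameCell (3 * c n) x y :=
      h.of_dvd (hc.pos _) ((Nat.mul_dvd_mul_right (by norm_num) _).trans (hc.nine_mul_dvd_succ n))
    calc dist (zigzagComp c (n + 1) x) (zigzagComp c (n + 1) y)
        = 3 ^ n * dist (zigzagAt (c n) x) (zigzagAt (c n) y) := ih (hthird.zigzagAt (hc.pos n))
      _ = 3 ^ (n + 1) * dist x y := by
        rw [dist_zigzagAt_of_sameCell (hc.pos n) hthird]
        ring

theorem zigzagComp_eq_of_le {m n : ℕ} (hmn : m ≤ n) {x : ℝ} {k : ℤ} (hk : c m * x = k) :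
    zigzagComp c n x = zigzagComp c m x := by
  induction n, hmn using Nat.le_induction with
  | base => rfl
  | succ n hmn ih =>
    obtain ⟨d, hd⟩ := hc.dvd_of_le hmn
    have hdk : c n * x = (d * k : ℤ) := by
      rw [hd]
      push_cast
      rw [← hk]
      ring
    rw [← ih, zigzagComp, Function.comp_apply, zigzagAt_eq_self (hc.pos n) hdk]

theorem dist_zigzagComp_succ_le (n : ℕ) (x : ℝ) :
    dist (zigzagComp c n x) (zigzagComp c (n + 1) x) ≤ 3 ^ n / c n := by
  calc dist (zigzagComp c n x) (zigzagComp c n (zigzagAt (c n) x))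
      ≤ 3 ^ n * dist x (zigzagAt (c n) x) := by
        simpa using (lipschitzWith_zigzagComp hc n).dist_le_mul x (zigzagAt (c n) x)
    _ ≤ 3 ^ n * (1 / c n) := by
        rw [dist_comm]
        gcongr
        exact dist_zigzagAt_self_le (hc.pos n) x
    _ = 3 ^ n / c n := mul_one_div _ _

theorem dist_zigzagComp_add_succ_le (n k : ℕ) (x : ℝ) :
    dist (zigzagComp c (n + k) x) (zigzagComp c (n + (k + 1)) x) ≤ 3 ^ n / c n * (1 / 3) ^ k := by
  have hcn : (0 : ℝ) < c n := by exact_mod_cast hc.pos n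
  have hgrowth : (9 : ℝ) ^ k * c n ≤ c (n + k) := by exact_mod_cast hc.nine_pow_mul_le n k
  calc dist (zigzagComp c (n + k) x) (zigzagComp c (n + k + 1) x)
      ≤ 3 ^ (n + k) / c (n + k) := dist_zigzagComp_succ_le hc _ x
    _ ≤ 3 ^ (n + k) / (9 ^ k * c n) := by gcongr
    _ = 3 ^ n / c n * (1 / 3) ^ k := by
        rw [show (9 : ℝ) = 3 * 3 by norm_num, mul_pow, one_div_pow, pow_add]
        field_simp

theorem tendsto_zigzagComp (x : ℝ) :
    Tendsto (fun n ↦ zigzagComp c n x) atTop (𝓝 (zigzagLimit c x)) :=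
  (cauchySeq_of_le_geometric (1 / 3) _ (by norm_num) fun k ↦ by
    simpa only [zero_add] using dist_zigzagComp_add_succ_le hc 0 k x).tendsto_limUnder

theorem dist_zigzagComp_zigzagLimit_le (n : ℕ) (x : ℝ) :
    dist (zigzagComp c n x) (zigzagLimit c x) ≤ 3 / 2 * (3 ^ n / c n) := by
  have hlim : Tendsto (fun k ↦ zigzagComp c (n + k) x) atTop (𝓝 (zigzagLimit c x)) :=
    (tendsto_zigzagComp hc x).comp (tendsto_atTop_mono (Nat.le_add_left · n) tendsto_id)
  refine (dist_le_of_le_geometric_of_tendsto₀ _ _ (by norm_num)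
    (dist_zigzagComp_add_succ_le hc n · x) hlim).trans_eq ?_
  ring

theorem measurePreserving_zigzagLimit :
    MeasurePreserving (zigzagLimit c) (volume.restrict (Icc 0 1)) (volume.restrict (Icc 0 1)) :=
  measurePreserving_of_tendsto (measurePreserving_zigzagComp hc) (tendsto_zigzagComp hc)

theorem zigzagLimit_eq_zigzagComp {n : ℕ} {x : ℝ} {k : ℤ} (hk : c n * x = k) :
    zigzagLimit c x = zigzagComp c n x :=
  tendsto_nhds_unique (tendsto_zigzagComp hc x) <|
    tendsto_const_nhds.congr' <| (eventually_ge_atTop n).mono fun _ hm ↦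
      (zigzagComp_eq_of_le hc hm hk).symm

theorem dist_zigzagLimit_grid (n : ℕ) (k : ℤ) :
    dist (zigzagLimit c ((k + 1) / c n)) (zigzagLimit c (k / c n)) = 3 ^ n * (1 / c n) := by
  have hcn : (c n : ℝ) ≠ 0 := by exact_mod_cast (hc.pos n).ne'
  have hleft : c n * (k / c n : ℝ) = k := mul_div_cancel₀ _ hcn
  have hright : c n * ((k + 1) / c n : ℝ) = k + 1 := mul_div_cancel₀ _ hcn
  have hcell : SameCell (c n) ((k + 1) / c n) (k / c n) :=
    ⟨k, by rw [hright]; simp, by rw [hleft]; simp⟩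
  rw [zigzagLimit_eq_zigzagComp hc (k := k + 1) (by rw [hright]; push_cast; rfl),
    zigzagLimit_eq_zigzagComp hc hleft, dist_zigzagComp_of_sameCell hc n hcell, Real.dist_eq,
    ← sub_div, add_sub_cancel_left, abs_of_nonneg (by positivity)]

theorem not_differentiableAt_zigzagLimit (x : ℝ) : ¬ DifferentiableAt ℝ (zigzagLimit c) x := by
  have hcpos (n : ℕ) : (0 : ℝ) < c n := by exact_mod_cast hc.pos n
  set a : ℕ → ℝ := fun n ↦ ⌊c n * x⌋ / c n with ha
  set b : ℕ → ℝ := fun n ↦ (⌊c n * x⌋ + 1) / c n with hb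
  have hab (n : ℕ) : b n - a n = 1 / c n := by simp only [ha, hb]; ring
  have hax (n : ℕ) : a n ≤ x := by
    rw [div_le_iff₀' (hcpos n)]
    exact Int.floor_le _
  have hxb (n : ℕ) : x ≤ b n := by
    rw [le_div_iff₀' (hcpos n)]
    exact (Int.lt_floor_add_one _).le
  have hlower : Tendsto (fun n ↦ x - 1 / (c n : ℝ)) atTop (𝓝 x) := by
    simpa using hc.tendsto_inv_atTop_zero.const_sub x
  have hupper : Tendsto (fun n ↦ x + 1 / (c n : ℝ)) atTop (𝓝 x) := by
    simpa using hc.tendsto_inv_atTop_zero.const_add x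
  refine not_differentiableAt_of_frequently_lt_dist (l := atTop) (a := a) (b := b)
    (hlower.squeeze tendsto_const_nhds (fun n ↦ by linarith [hab n, hxb n]) hax)
    (tendsto_const_nhds.squeeze hupper hxb (fun n ↦ by linarith [hab n, hax n])) hax hxb ?_
  intro C
  have hpow : Tendsto (fun n ↦ (3 : ℝ) ^ n) atTop atTop :=
    tendsto_pow_atTop_atTop_of_one_lt (by norm_num)
  refine (hpow.eventually_gt_atTop C).frequently.mono fun n hn ↦ ?_
  rw [hab, dist_zigzagLimit_grid hc]
  exact mul_lt_mul_of_pos_right hn (one_div_pos.2 (hcpos n))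

theorem dist_zigzagLimit_le {n : ℕ} {x y : ℝ} (hxy : 1 / c n ≤ dist x y) :
    dist (zigzagLimit c x) (zigzagLimit c y) ≤ 4 * 3 ^ n * dist x y := by
  have hlim (z : ℝ) : dist (zigzagComp c n z) (zigzagLimit c z) ≤ 3 / 2 * (3 ^ n * dist x y) := by
    refine (dist_zigzagComp_zigzagLimit_le hc n z).trans ?_
    rw [div_eq_mul_one_div (3 ^ n : ℝ)]
    gcongr
  have hlip : dist (zigzagComp c n x) (zigzagComp c n y) ≤ 3 ^ n * dist x y := by
    simpa using (lipschitzWith_zigzagComp hc n).dist_le_mul x y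
  calc dist (zigzagLimit c x) (zigzagLimit c y)
      ≤ dist (zigzagLimit c x) (zigzagComp c n x) + dist (zigzagComp c n x) (zigzagComp c n y)
        + dist (zigzagComp c n y) (zigzagLimit c y) := dist_triangle4 _ _ _ _
    _ ≤ 3 / 2 * (3 ^ n * dist x y) + 3 ^ n * dist x y + 3 / 2 * (3 ^ n * dist x y) :=
        add_le_add_three (dist_comm (zigzagLimit c x) _ ▸ hlim x) hlip (hlim y)
    _ = 4 * 3 ^ n * dist x y := by ring

theorem holderOnUnit_zigzagLimit {α K : ℝ} (hα : α ≤ 1)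
    (hK : ∀ n, (3 : ℝ) ^ n ≤ K * (c n : ℝ) ^ (1 - α)) : HolderOnUnit (zigzagLimit c) α := by
  have hK₀ : 0 ≤ K := by simpa [hc.zero] using zero_le_one.trans (hK 0)
  refine ⟨12 * K, fun x hx y hy ↦ ?_⟩
  rw [← Real.dist_eq, ← Real.dist_eq]
  rcases eq_or_ne x y with rfl | hne
  · rw [dist_self, dist_self]
    positivity
  have hpos : 0 < dist x y := dist_pos.2 hne
  obtain ⟨n, hlower, hupper⟩ :=
    hc.exists_between_consecutive hpos (Real.dist_le_of_mem_Icc_01 hx hy)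
  have hcn : (0 : ℝ) < c n := by exact_mod_cast hc.pos n
  have hstretch : (3 : ℝ) ^ n * dist x y ^ (1 - α) ≤ K := by
    calc (3 : ℝ) ^ n * dist x y ^ (1 - α)
        ≤ K * (c n : ℝ) ^ (1 - α) * (1 / c n) ^ (1 - α) := by
          gcongr
          exact hK n
      _ = K := by
          rw [mul_assoc, ← Real.mul_rpow (by positivity) (by positivity),
            mul_one_div_cancel hcn.ne', Real.one_rpow, mul_one]
  calc dist (zigzagLimit c x) (zigzagLimit c y) ≤ 4 * 3 ^ (n + 1) * dist x y :=
        dist_zigzagLimit_le hc hlower.le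
    _ = 12 * (3 ^ n * dist x y ^ (1 - α)) * dist x y ^ α := by
        rw [mul_assoc 12, mul_assoc (3 ^ n), ← Real.rpow_add hpos, sub_add_cancel, Real.rpow_one]
        ring
    _ ≤ 12 * K * dist x y ^ α := by gcongr

end Limit

/-! ### A superexponential scale sequence -/

/-- The scale sequence `9 ^ n ^ 2`, whose superexponential growth makes the limit of the zigzags
Hölder continuous of every exponent less than `1`. -/
def ninePowSq (n : ℕ) : ℕ := 9 ^ n ^ 2

theorem isScaleSequence_ninePowSq : IsScaleSequence ninePowSq where
  zero := by norm_num [ninePowSq]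
  pos n := by unfold ninePowSq; positivity
  nine_mul_dvd_succ n := by
    rw [ninePowSq, ninePowSq, ← pow_succ']
    exact pow_dvd_pow 9 (by rw [add_sq]; omega)

theorem exists_three_pow_le_mul_ninePowSq_rpow {β : ℝ} (hβ : 0 < β) :
    ∃ K : ℝ, ∀ n, (3 : ℝ) ^ n ≤ K * (ninePowSq n : ℝ) ^ β := by
  refine ⟨3 ^ (1 / (8 * β)), fun n ↦ ?_⟩
  have hexp : (n : ℝ) ≤ 1 / (8 * β) + 2 * n ^ 2 * β := by
    have hsq : 1 / (8 * β) + 2 * n ^ 2 * β - n = (4 * β * n - 1) ^ 2 / (8 * β) := by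
      field_simp
      ring
    have hnonneg : 0 ≤ (4 * β * n - 1) ^ 2 / (8 * β) := by positivity
    linarith
  have hnine : (ninePowSq n : ℝ) = 3 ^ (2 * n ^ 2 : ℝ) := by
    rw [ninePowSq, show (9 : ℕ) = 3 ^ 2 by norm_num, ← pow_mul]
    exact_mod_cast rfl
  calc (3 : ℝ) ^ n = 3 ^ (n : ℝ) := (Real.rpow_natCast 3 n).symm
    _ ≤ 3 ^ (1 / (8 * β) + 2 * n ^ 2 * β) := Real.rpow_le_rpow_of_exponent_le (by norm_num) hexp
    _ = 3 ^ (1 / (8 * β)) * (ninePowSq n : ℝ) ^ β := by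
      rw [Real.rpow_add three_pos, Real.rpow_mul (by norm_num), hnine]

/-- There exist `f : [0,1] → ℝ` Hölder continuous of every exponent `α ∈ (0,1)` and `r > 0`
such that `f_#(𝟙_S L¹) = r · 𝟙_{[0,1]} L¹`; in particular the pushforward is absolutely
continuous with respect to Lebesgue measure and nonzero. -/
theorem exists_holder_pushforward_eq_smul_lebesgue :
    ∃ (f : ℝ → ℝ) (r : ℝ),
      (∀ α ∈ Set.Ioo (0:ℝ) 1, HolderOnUnit f α) ∧
      0 < r ∧
      Measure.map f (volume.restrict (critSet1 f)) =
        ENNReal.ofReal r • volume.restrict (Set.Icc (0:ℝ) 1) ∧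
      Measure.map f (volume.restrict (critSet1 f)) ≪ volume ∧
      Measure.map f (volume.restrict (critSet1 f)) ≠ 0 := by
  set f := zigzagLimit ninePowSq
  have hmap : Measure.map f (volume.restrict (critSet1 f)) = volume.restrict (Icc 0 1) := by
    rw [Measure.restrict_congr_set
      (critSet1_ae_eq_Icc (not_differentiableAt_zigzagLimit isScaleSequence_ninePowSq))]
    exact (measurePreserving_zigzagLimit isScaleSequence_ninePowSq).map_eq
  refine ⟨f, 1, fun α hα ↦ ?_, one_pos, ?_, ?_, ?_⟩
  · obtain ⟨K, hK⟩ := exists_three_pow_le_mul_ninePowSq_rpow (sub_pos.2 hα.2)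
    exact holderOnUnit_zigzagLimit isScaleSequence_ninePowSq hα.2.le hK
  · rw [hmap, ENNReal.ofReal_one, one_smul]
  · rw [hmap]
    exact Measure.restrict_le_self.absolutelyContinuous
  · rw [hmap, Ne, Measure.restrict_eq_zero, Real.volume_Icc]
    norm_num
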